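/- Let n ≥ 1 and let x, y ∈ [0,∞)^n with ∑_{i=1}^n x_i = ∑_{i=1}^n y_i. Then the following are equivalent: (a) x majorizes y; (b) G_{k,r}(x) ≤ G_{k,r}(y) for all integers k, r ≥ 1; (c) M_{k,r}(x) ≥ M_{k,r}(y) for all integers k, r ≥ 1. -/

import Mathlib

open Finset MeasureTheory

/-- `G n k r x`: the sum over all n-tuples p of nonnegative integers with `∑ i, p i = k`
and at least `r` nonzero entries, of `∏ i, x i ^ p i / (p i)!`. -/
noncomputable def G (n k r : ℕ) (x : Fin n → ℝ) : ℝ :=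
  ∑ κ ∈ Finset.univ.filter (fun κ : Fin n → Fin (k + 1) =>
      (∑ i, (κ i : ℕ)) = k ∧ r ≤ (Finset.univ.filter fun i => (κ i : ℕ) ≠ 0).card),
    ∏ i, x i ^ (κ i : ℕ) / (Nat.factorial (κ i : ℕ))

/-- `M n k r x = ∑_{1 ≤ i₁ < ⋯ < i_r ≤ n} (x_{i₁} + ⋯ + x_{i_r})^k`. -/
noncomputable def M (n k r : ℕ) (x : Fin n → ℝ) : ℝ :=
  ∑ A ∈ Finset.powersetCard r (Finset.univ : Finset (Fin n)), (∑ i ∈ A, x i) ^ k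

/-- The sum of the `m` largest entries of `x`, i.e. the largest sum of `m` entries. -/
noncomputable def sMax (n m : ℕ) (x : Fin n → ℝ) : ℝ :=
  sSup {s : ℝ | ∃ A : Finset (Fin n), A.card = m ∧ s = ∑ i ∈ A, x i}

/-- `x` majorizes `y`: equal total sums, and for each `1 ≤ m ≤ n-1` the sum of the
`m` largest entries of `x` is at least that of `y`. -/
def Majorizes (n : ℕ) (x y : Fin n → ℝ) : Prop :=
  (∑ i, x i = ∑ i, y i) ∧ ∀ m : ℕ, 1 ≤ m → m ≤ n - 1 → sMax n m y ≤ sMax n m x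

/-!
Majorization is generated by transfers that pull two entries together (Hardy–Littlewood–Pólya).
Let `fᵢ = exp (xᵢ X)` as a formal power series. Then `M_{k,r}(x) / k!` is the `X ^ k`-coefficient
of the elementary symmetric function `e_r` in the `fᵢ`, and `G_{k,r}(x)` that of the sum of the
`e_s`, `s ≥ r`, in the `fᵢ - 1`. A transfer between `xᵢ` and `xⱼ` fixes `fᵢ fⱼ` and, by convexity of
powers, decreases `fᵢ + fⱼ` coefficientwise; expanding both symmetric functions in these two
variables shows that `M` decreases and `G` increases.

Conversely, each family of inequalities bounds `(sMax n m y) ^ k` by `n.choose m * (sMax n m x) ^ k`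
for every `k`, which forces `sMax n m y ≤ sMax n m x`. For `G` this uses that the terms with at most
`m` nonzero exponents make up the complement of `G_{k,m+1}` in the expansion of `(∑ xᵢ) ^ k / k!`.
-/

section Transfer

variable {ι : Type*}

/-- `y` arises from `x` by a *Robin Hood transfer*: an amount is moved from an entry `x i` to an
entry `x j`, both new values staying between `x j` and `x i`. Swapping two entries is the extreme
case, so permuting the entries needs no separate rule. -/
def IsTransfer (x y : ι → ℝ) : Prop :=
  ∃ i j, i ≠ j ∧ y i + y j = x i + x j ∧ x j ≤ y i ∧ x j ≤ y j ∧
    ∀ k, k ≠ i → k ≠ j → y k = x k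

lemma IsTransfer.nonneg {x y : ι → ℝ} (h : IsTransfer x y) (hx : ∀ k, 0 ≤ x k) (k : ι) :
    0 ≤ y k := by
  obtain ⟨i, j, -, -, hi, hj, hrest⟩ := h
  rcases eq_or_ne k i with rfl | hki
  · exact (hx j).trans hi
  rcases eq_or_ne k j with rfl | hkj
  · exact (hx k).trans hj
  · exact (hx k).trans_eq (hrest k hki hkj).symm

lemma le_of_reflTransGen_isTransfer {F : (ι → ℝ) → ℝ}
    (hF : ∀ x y, (∀ k, 0 ≤ x k) → IsTransfer x y → F x ≤ F y) {x y : ι → ℝ}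
    (hx : ∀ k, 0 ≤ x k) (h : Relation.ReflTransGen IsTransfer x y) : F x ≤ F y := by
  induction h using Relation.ReflTransGen.head_induction_on with
  | refl => rfl
  | head hstep _ ih => exact (hF _ _ hx hstep).trans (ih (hstep.nonneg hx))

section DecidableEq

variable [DecidableEq ι]

/-- The vector obtained from `x` by moving the amount `t` from the entry `x i` to `x j`. -/
def transfer (x : ι → ℝ) (i j : ι) (t : ℝ) : ι → ℝ := x - Pi.single i t + Pi.single j t

lemma transfer_apply_left (x : ι → ℝ) {i j : ι} (hij : i ≠ j) (t : ℝ) :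
    transfer x i j t i = x i - t := by
  simp [transfer, hij]

lemma transfer_apply_right (x : ι → ℝ) {i j : ι} (hij : i ≠ j) (t : ℝ) :
    transfer x i j t j = x j + t := by
  simp [transfer, hij.symm]

lemma transfer_apply_of_ne (x : ι → ℝ) {i j k : ι} (hki : k ≠ i) (hkj : k ≠ j) (t : ℝ) :
    transfer x i j t k = x k := by
  simp [transfer, hki, hkj]

lemma sum_transfer (x : ι → ℝ) (i j : ι) (t : ℝ) (s : Finset ι) :
    ∑ k ∈ s, transfer x i j t k =
      ∑ k ∈ s, x k - (if i ∈ s then t else 0) + if j ∈ s then t else 0 := by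
  simp [transfer, sum_add_distrib, sum_sub_distrib, sum_pi_single']

lemma isTransfer_transfer {x : ι → ℝ} {i j : ι} (hij : i ≠ j) {t : ℝ} (ht : 0 ≤ t)
    (htle : t ≤ x i - x j) : IsTransfer x (transfer x i j t) := by
  refine ⟨i, j, hij, ?_, ?_, ?_, fun k hki hkj ↦ transfer_apply_of_ne x hki hkj t⟩ <;>
    (simp only [transfer_apply_left x hij, transfer_apply_right x hij]; linarith)

lemma isTransfer_comp_swap (x : ι → ℝ) {i j : ι} (hij : i ≠ j) :
    IsTransfer x (x ∘ Equiv.swap i j) := by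
  wlog h : x j ≤ x i generalizing i j
  · rw [Equiv.swap_comm]
    exact this hij.symm (le_of_not_ge h)
  refine ⟨i, j, hij, ?_, ?_, ?_, fun k hki hkj ↦ ?_⟩
  · simp [add_comm]
  · simp
  · simpa using h
  · simp [Equiv.swap_apply_of_ne_of_ne hki hkj]

lemma card_transfer_ne_lt [Fintype ι] {x y : ι → ℝ} {i j : ι} (hij : i ≠ j) (hi : y i < x i)
    (hj : x j < y j) :
    #{k | transfer x i j (min (x i - y i) (y j - x j)) k ≠ y k} < #{k | x k ≠ y k} := by
  refine card_lt_card ((ssubset_iff_of_subset fun k hk ↦ ?_).2 ?_)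
  · simp only [mem_filter_univ] at hk ⊢
    rcases eq_or_ne k i with rfl | hki
    · exact hi.ne'
    rcases eq_or_ne k j with rfl | hkj
    · exact hj.ne
    · rwa [transfer_apply_of_ne x hki hkj] at hk
  · rcases min_choice (x i - y i) (y j - x j) with hmin | hmin <;> rw [hmin]
    · exact ⟨i, by simp [hi.ne'], by simp [transfer_apply_left x hij]⟩
    · exact ⟨j, by simp [hj.ne], by simp [transfer_apply_right x hij]⟩

end DecidableEq

lemma reflTransGen_isTransfer_comp_perm [Finite ι] (x : ι → ℝ) (σ : Equiv.Perm ι) :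
    Relation.ReflTransGen IsTransfer x (x ∘ σ) := by
  classical
  induction σ using Equiv.Perm.swap_induction_on generalizing x with
  | one => rfl
  | swap_mul τ i j hij ih => exact .head (isTransfer_comp_swap x hij) (ih _)

section LinearOrder

variable [LinearOrder ι] [LocallyFiniteOrderBot ι]

lemma exists_surplus_before_first_deficit [Fintype ι] {x y : ι → ℝ}
    (hsum : ∑ k, x k = ∑ k, y k) (hpre : ∀ m, ∑ k ∈ Iic m, y k ≤ ∑ k ∈ Iic m, x k)
    (hne : x ≠ y) :
    ∃ i j, i < j ∧ y i < x i ∧ x j < y j ∧ ∀ k < j, y k ≤ x k := by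
  have hdeficit : ∃ j, x j < y j := by
    by_contra! hle
    have := (sum_eq_sum_iff_of_le fun k _ ↦ hle k).1 hsum.symm
    exact hne (funext fun k ↦ (this k (mem_univ k)).symm)
  obtain ⟨j, hj, hfirst⟩ := wellFounded_lt.has_min {j | x j < y j} hdeficit
  have hbefore : ∀ k < j, y k ≤ x k := fun k hk ↦ not_lt.1 fun hlt ↦ hfirst k hlt hk
  obtain ⟨i, hi, hxi⟩ : ∃ i < j, y i < x i := by
    by_contra! hle
    refine (hpre j).not_gt (sum_lt_sum (fun k hk ↦ ?_) ⟨j, by simp, hj⟩)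
    rcases (mem_Iic.1 hk).lt_or_eq with hkj | rfl
    exacts [hle k hkj, le_of_lt hj]
  exact ⟨i, j, hi, hxi, hj, hbefore⟩

lemma sum_Iic_le_sum_Iic_transfer {x y : ι → ℝ} {i j : ι} (hij : i < j) {t : ℝ} (ht : t ≤ x i - y i)
    (hbefore : ∀ k < j, y k ≤ x k) (hpre : ∀ m, ∑ k ∈ Iic m, y k ≤ ∑ k ∈ Iic m, x k) (m : ι) :
    ∑ k ∈ Iic m, y k ≤ ∑ k ∈ Iic m, transfer x i j t k := by
  rw [sum_transfer]
  simp only [mem_Iic]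
  by_cases hjm : j ≤ m
  · simpa [hjm, hij.le.trans hjm] using hpre m
  by_cases him : i ≤ m
  · have hsurplus : x i - y i ≤ ∑ k ∈ Iic m, (x k - y k) :=
      single_le_sum (f := fun k ↦ x k - y k)
        (fun k hk ↦ sub_nonneg.2 (hbefore k ((mem_Iic.1 hk).trans_lt (not_le.1 hjm))))
        (mem_Iic.2 him)
    rw [sum_sub_distrib] at hsurplus
    simp only [him, hjm, if_true, if_false]
    linarith
  · simpa [hjm, him] using hpre m

/-- Each transfer, from a surplus of `x` over `y` to the first deficit, makes one more entry of `x`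
agree with `y`. -/
theorem reflTransGen_isTransfer_of_sum_Iic_le [Fintype ι] {y : ι → ℝ} (hy : Antitone y)
    {x : ι → ℝ} (hsum : ∑ k, x k = ∑ k, y k)
    (hpre : ∀ m, ∑ k ∈ Iic m, y k ≤ ∑ k ∈ Iic m, x k) :
    Relation.ReflTransGen IsTransfer x y := by
  induction hN : #{k | x k ≠ y k} using Nat.strong_induction_on generalizing x with
  | _ N ih =>
  rcases eq_or_ne x y with rfl | hne
  · rfl
  obtain ⟨i, j, hij, hi, hj, hbefore⟩ := exists_surplus_before_first_deficit hsum hpre hne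
  set t := min (x i - y i) (y j - x j)
  have hti : t ≤ x i - y i := min_le_left _ _
  have ht : 0 ≤ t := le_min (sub_nonneg.2 hi.le) (sub_nonneg.2 hj.le)
  have hstep : IsTransfer x (transfer x i j t) :=
    isTransfer_transfer hij.ne ht (by linarith [hy hij.le])
  refine .head hstep (ih _ (hN ▸ card_transfer_ne_lt hij.ne hi hj) ?_ ?_ rfl)
  · simpa [sum_transfer] using hsum
  · exact sum_Iic_le_sum_Iic_transfer hij hti hbefore hpre

lemma sum_le_sum_Iic_of_antitone {x : ι → ℝ} (hx : Antitone x) {A : Finset ι} {m : ι}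
    (hA : #A = #(Iic m)) : ∑ k ∈ A, x k ≤ ∑ k ∈ Iic m, x k := by
  rw [← sum_sdiff_le_sum_sdiff]
  calc ∑ k ∈ A \ Iic m, x k
      ≤ #(A \ Iic m) • x m :=
        sum_le_card_nsmul _ _ _ fun k hk ↦
          hx (le_of_not_ge fun hkm ↦ (mem_sdiff.1 hk).2 (mem_Iic.2 hkm))
    _ = #(Iic m \ A) • x m := by rw [card_sdiff_comm hA]
    _ ≤ ∑ k ∈ Iic m \ A, x k :=
        card_nsmul_le_sum _ _ _ fun k hk ↦ hx (mem_Iic.1 (mem_sdiff.1 hk).1)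

end LinearOrder
end Transfer

section Majorization

variable {n m : ℕ}

lemma finite_setOf_sum_eq (n m : ℕ) (x : Fin n → ℝ) :
    {s : ℝ | ∃ A : Finset (Fin n), #A = m ∧ s = ∑ i ∈ A, x i}.Finite :=
  (Set.finite_range fun A : Finset (Fin n) ↦ ∑ i ∈ A, x i).subset
    fun _ ⟨A, _, hs⟩ ↦ ⟨A, hs.symm⟩

lemma sum_le_sMax (x : Fin n → ℝ) (A : Finset (Fin n)) : ∑ i ∈ A, x i ≤ sMax n #A x :=
  le_csSup (finite_setOf_sum_eq n _ x).bddAbove ⟨A, rfl, rfl⟩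

lemma exists_sMax_eq_sum (hm : m ≤ n) (x : Fin n → ℝ) :
    ∃ A : Finset (Fin n), #A = m ∧ sMax n m x = ∑ i ∈ A, x i := by
  obtain ⟨A, -, hA⟩ := exists_subset_card_eq (s := (univ : Finset (Fin n))) (by simpa using hm)
  have hne : {s : ℝ | ∃ A : Finset (Fin n), #A = m ∧ s = ∑ i ∈ A, x i}.Nonempty :=
    ⟨_, A, hA, rfl⟩
  exact hne.csSup_mem (finite_setOf_sum_eq n m x)

lemma sMax_nonneg (m : ℕ) {x : Fin n → ℝ} (hx : ∀ i, 0 ≤ x i) : 0 ≤ sMax n m x :=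
  Real.sSup_nonneg fun _ ⟨_, _, hs⟩ ↦ hs ▸ sum_nonneg fun i _ ↦ hx i

lemma exists_perm_antitone (x : Fin n → ℝ) : ∃ σ : Equiv.Perm (Fin n), Antitone (x ∘ σ) :=
  ⟨Tuple.sort (OrderDual.toDual ∘ x), Tuple.monotone_sort (OrderDual.toDual ∘ x)⟩

lemma Majorizes.sMax_le {x y : Fin n → ℝ} (h : Majorizes n x y) (hm₀ : 1 ≤ m) (hm : m ≤ n) :
    sMax n m y ≤ sMax n m x := by
  rcases hm.lt_or_eq with hlt | rfl
  · exact h.2 m hm₀ (by omega)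
  have sMax_self (z : Fin m → ℝ) : sMax m m z = ∑ i, z i := by
    obtain ⟨A, hA, hz⟩ := exists_sMax_eq_sum le_rfl z
    rw [hz, (card_eq_iff_eq_univ A).1 (by simpa using hA)]
  rw [sMax_self, sMax_self, h.1]

lemma Majorizes.sum_Iic_comp_perm_le {x y : Fin n → ℝ} (h : Majorizes n x y)
    {σ : Equiv.Perm (Fin n)} (hσ : Antitone (x ∘ σ)) (τ : Equiv.Perm (Fin n)) (j : Fin n) :
    ∑ k ∈ Iic j, (y ∘ τ) k ≤ ∑ k ∈ Iic j, (x ∘ σ) k := by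
  obtain ⟨A, hA, hmax⟩ := exists_sMax_eq_sum (m := j + 1) j.2 x
  calc ∑ k ∈ Iic j, (y ∘ τ) k
      = ∑ k ∈ (Iic j).map τ.toEmbedding, y k := by simp
    _ ≤ sMax n (j + 1) y := by
        simpa [card_map, Fin.card_Iic] using sum_le_sMax y ((Iic j).map τ.toEmbedding)
    _ ≤ sMax n (j + 1) x := h.sMax_le (by omega) j.2
    _ = ∑ k ∈ A.map σ.symm.toEmbedding, (x ∘ σ) k := by simp [hmax]
    _ ≤ ∑ k ∈ Iic j, (x ∘ σ) k := sum_le_sum_Iic_of_antitone hσ (by simp [hA])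

theorem Majorizes.reflTransGen_isTransfer {x y : Fin n → ℝ} (h : Majorizes n x y) :
    Relation.ReflTransGen IsTransfer x y := by
  obtain ⟨σ, hσ⟩ := exists_perm_antitone x
  obtain ⟨τ, hτ⟩ := exists_perm_antitone y
  have hsum : ∑ k, (x ∘ σ) k = ∑ k, (y ∘ τ) k :=
    (Equiv.sum_comp σ x).trans (h.1.trans (Equiv.sum_comp τ y).symm)
  have hsorted : Relation.ReflTransGen IsTransfer (x ∘ σ) (y ∘ τ) :=
    reflTransGen_isTransfer_of_sum_Iic_le hτ hsum (h.sum_Iic_comp_perm_le hσ τ)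
  have hunsort : Relation.ReflTransGen IsTransfer (y ∘ τ) y := by
    simpa [Function.comp_assoc] using reflTransGen_isTransfer_comp_perm (y ∘ τ) τ.symm
  exact (reflTransGen_isTransfer_comp_perm x σ).trans (hsorted.trans hunsort)

end Majorization

lemma add_le_add_of_convexOn {s : Set ℝ} {f : ℝ → ℝ} (hf : ConvexOn ℝ s f) {u v u' v' : ℝ}
    (hu : u ∈ s) (hv : v ∈ s) (hsum : u' + v' = u + v) (hvu' : v ≤ u') (hvv' : v ≤ v') :
    f u' + f v' ≤ f u + f v := by
  obtain ⟨a, b, ha, hb, hab, rfl⟩ : u' ∈ segment ℝ u v := by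
    rw [segment_symm, segment_eq_Icc (by linarith)]
    exact ⟨hvu', by linarith⟩
  obtain rfl : v' = b • u + a • v := by
    simp only [smul_eq_mul] at hsum ⊢
    linear_combination hsum - (u + v) * hab
  have h₁ := hf.2 hu hv ha hb hab
  have h₂ := hf.2 hu hv hb ha (by linarith)
  simp only [smul_eq_mul] at h₁ h₂ ⊢
  calc f (a * u + b * v) + f (b * u + a * v)
      ≤ (a * f u + b * f v) + (b * f u + a * f v) := add_le_add h₁ h₂
    _ = f u + f v := by linear_combination (f u + f v) * hab

section SymmetricSum

variable {ι S R : Type*} [Fintype ι] [CommRing S] [CommRing R] [Algebra S R]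

/-- The combination `∑ₘ c m • eₘ(f)` of the elementary symmetric functions `eₘ` of the family `f`,
written as one sum over all sets of indices. -/
def esymmSum (c : ℕ → S) (f : ι → R) : R := ∑ A : Finset ι, c #A • ∏ i ∈ A, f i

variable [DecidableEq ι]

lemma sum_finset_eq_sum_powerset_compl_pair {E : Type*} [AddCommMonoid E] {i j : ι} (hij : i ≠ j)
    (g : Finset ι → E) :
    ∑ A, g A = ∑ B ∈ ({i, j}ᶜ : Finset ι).powerset,
      (g B + g (insert j B) + (g (insert i B) + g (insert i (insert j B)))) := by
  have huniv : (univ : Finset ι) = insert i (insert j {i, j}ᶜ) := by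
    ext k
    simp only [mem_univ, mem_insert, mem_compl, mem_singleton, true_iff]
    tauto
  rw [← powerset_univ, huniv, sum_powerset_insert (by simp [hij]), sum_powerset_insert (by simp),
    sum_powerset_insert (by simp)]
  simp only [sum_add_distrib]

lemma esymmSum_eq_sum_powerset_compl_pair (c : ℕ → S) (f : ι → R) {i j : ι} (hij : i ≠ j) :
    esymmSum c f = ∑ B ∈ ({i, j}ᶜ : Finset ι).powerset,
      (c #B • 1 + c (#B + 1) • (f i + f j) + c (#B + 2) • (f i * f j)) * ∏ l ∈ B, f l := by
  rw [esymmSum, sum_finset_eq_sum_powerset_compl_pair hij]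
  refine sum_congr rfl fun B hB ↦ ?_
  have hi : i ∉ B := fun h ↦ by simpa using mem_powerset.1 hB h
  have hj : j ∉ B := fun h ↦ by simpa using mem_powerset.1 hB h
  have hi' : i ∉ insert j B := by simp [hij, hi]
  simp only [card_insert_of_notMem hi, card_insert_of_notMem hj, card_insert_of_notMem hi',
    prod_insert hi, prod_insert hj, prod_insert hi', Algebra.smul_def]
  ring

variable {f g : ι → R} {i j : ι}

lemma prod_eq_of_mem_powerset_compl_pair (hfg : ∀ k, k ≠ i → k ≠ j → g k = f k) {B : Finset ι}
    (hB : B ∈ ({i, j}ᶜ : Finset ι).powerset) : ∏ l ∈ B, g l = ∏ l ∈ B, f l := by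
  refine prod_congr rfl fun l hl ↦ ?_
  have hl' := mem_powerset.1 hB hl
  simp only [mem_compl, mem_insert, mem_singleton, not_or] at hl'
  exact hfg l hl'.1 hl'.2

lemma esymmSum_sub_of_mul_eq_mul (c : ℕ → S) (hij : i ≠ j)
    (hfg : ∀ k, k ≠ i → k ≠ j → g k = f k) (hmul : g i * g j = f i * f j) :
    esymmSum c f - esymmSum c g = ∑ B ∈ ({i, j}ᶜ : Finset ι).powerset,
      c (#B + 1) • ((f i + f j - (g i + g j)) * ∏ l ∈ B, f l) := by
  rw [esymmSum_eq_sum_powerset_compl_pair c f hij, esymmSum_eq_sum_powerset_compl_pair c g hij,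
    ← sum_sub_distrib]
  refine sum_congr rfl fun B hB ↦ ?_
  rw [prod_eq_of_mem_powerset_compl_pair hfg hB, hmul]
  simp only [Algebra.smul_def]
  ring

lemma esymmSum_sub_of_one_add_mul_one_add_eq (c : ℕ → S) (hij : i ≠ j)
    (hfg : ∀ k, k ≠ i → k ≠ j → g k = f k)
    (hmul : (1 + g i) * (1 + g j) = (1 + f i) * (1 + f j)) :
    esymmSum c g - esymmSum c f = ∑ B ∈ ({i, j}ᶜ : Finset ι).powerset,
      (c (#B + 2) - c (#B + 1)) • ((f i + f j - (g i + g j)) * ∏ l ∈ B, f l) := by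
  rw [esymmSum_eq_sum_powerset_compl_pair c f hij, esymmSum_eq_sum_powerset_compl_pair c g hij,
    ← sum_sub_distrib]
  refine sum_congr rfl fun B hB ↦ ?_
  rw [prod_eq_of_mem_powerset_compl_pair hfg hB]
  simp only [Algebra.smul_def, map_sub]
  linear_combination algebraMap S R (c (#B + 2)) * (∏ l ∈ B, f l) * hmul

end SymmetricSum

section ExpSeries

open scoped PowerSeries

/-- The exponential series `e^{aX}`. -/
noncomputable def expSeries (a : ℝ) : ℝ⟦X⟧ := PowerSeries.rescale a (PowerSeries.exp ℝ)

/-- The power series with nonnegative coefficients; they order `ℝ⟦X⟧` coefficientwise. -/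
def nonnegCoeffs : Subsemiring ℝ⟦X⟧ where
  carrier := {f | ∀ k, 0 ≤ PowerSeries.coeff k f}
  mul_mem' hf hg k := by
    rw [PowerSeries.coeff_mul]
    exact sum_nonneg fun p _ ↦ mul_nonneg (hf p.1) (hg p.2)
  one_mem' k := by
    rw [PowerSeries.coeff_one]
    split_ifs <;> norm_num
  add_mem' hf hg k := by
    rw [map_add]
    exact add_nonneg (hf k) (hg k)
  zero_mem' k := by simp

lemma coeff_nonneg_of_mem_nonnegCoeffs {f : ℝ⟦X⟧} (hf : f ∈ nonnegCoeffs) (k : ℕ) :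
    0 ≤ PowerSeries.coeff k f := hf k

lemma coeff_expSeries (k : ℕ) (a : ℝ) :
    PowerSeries.coeff k (expSeries a) = a ^ k / k.factorial := by
  simp [expSeries, PowerSeries.coeff_rescale, PowerSeries.coeff_exp, div_eq_mul_inv]

lemma coeff_expSeries_sub_one (k : ℕ) (a : ℝ) :
    PowerSeries.coeff k (expSeries a - 1) = if k = 0 then 0 else a ^ k / k.factorial := by
  rw [map_sub, coeff_expSeries, PowerSeries.coeff_one]
  split_ifs with hk <;> simp [hk]

lemma expSeries_add (a b : ℝ) : expSeries (a + b) = expSeries a * expSeries b :=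
  (PowerSeries.exp_mul_exp_eq_exp_add a b).symm

lemma expSeries_sum {ι : Type*} (A : Finset ι) (x : ι → ℝ) :
    expSeries (∑ i ∈ A, x i) = ∏ i ∈ A, expSeries (x i) := by
  classical
  induction A using Finset.induction_on with
  | empty =>
    ext k
    rw [coeff_expSeries]
    rcases k with _ | k <;> simp [PowerSeries.coeff_one]
  | insert i A hi ih => rw [sum_insert hi, prod_insert hi, expSeries_add, ih]

lemma expSeries_mem_nonnegCoeffs {a : ℝ} (ha : 0 ≤ a) : expSeries a ∈ nonnegCoeffs := fun k ↦ by
  rw [coeff_expSeries]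
  positivity

lemma expSeries_sub_one_mem_nonnegCoeffs {a : ℝ} (ha : 0 ≤ a) :
    expSeries a - 1 ∈ nonnegCoeffs := fun k ↦ by
  rw [coeff_expSeries_sub_one]
  split_ifs <;> positivity

lemma expSeries_add_sub_mem_nonnegCoeffs {u v u' v' : ℝ} (hu : 0 ≤ u) (hv : 0 ≤ v)
    (hsum : u' + v' = u + v) (hvu' : v ≤ u') (hvv' : v ≤ v') :
    expSeries u + expSeries v - (expSeries u' + expSeries v') ∈ nonnegCoeffs := fun k ↦ by
  simp only [map_sub, map_add, coeff_expSeries, ← add_div, ← sub_div]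
  exact div_nonneg (sub_nonneg.2 (add_le_add_of_convexOn (convexOn_pow k) hu hv hsum hvu' hvv'))
    (by positivity)

end ExpSeries

section SupportTerm

open scoped PowerSeries

/-- The `k`-th coefficient of `∏ i ∈ B, (e^{x i X} - 1)`, i.e. the sum of `∏ i, x i ^ p i / (p i)!`
over the exponent tuples `p` of total `k` whose support is exactly `B`. -/
noncomputable def supportTerm {ι : Type*} (k : ℕ) (x : ι → ℝ) (B : Finset ι) : ℝ :=
  PowerSeries.coeff k (∏ i ∈ B, (expSeries (x i) - 1))

section General

variable {ι : Type*} {x : ι → ℝ}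

lemma supportTerm_nonneg (hx : ∀ i, 0 ≤ x i) (k : ℕ) (B : Finset ι) : 0 ≤ supportTerm k x B :=
  coeff_nonneg_of_mem_nonnegCoeffs
    (prod_mem fun i _ ↦ expSeries_sub_one_mem_nonnegCoeffs (hx i)) k

lemma sum_powerset_supportTerm (k : ℕ) (x : ι → ℝ) (A : Finset ι) :
    ∑ B ∈ A.powerset, supportTerm k x B = (∑ i ∈ A, x i) ^ k / k.factorial := by
  simp only [supportTerm, ← map_sum, ← prod_add_one, sub_add_cancel]
  rw [← expSeries_sum, coeff_expSeries]

variable [Fintype ι]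

lemma pow_sum_div_factorial_le_sum_supportTerm (hx : ∀ i, 0 ≤ x i) (k : ℕ) (A : Finset ι) :
    (∑ i ∈ A, x i) ^ k / k.factorial ≤ ∑ B with #B ≤ #A, supportTerm k x B := by
  rw [← sum_powerset_supportTerm]
  refine sum_le_sum_of_subset_of_nonneg (fun B hB ↦ ?_) fun B _ _ ↦ supportTerm_nonneg hx k B
  simpa using card_le_card (mem_powerset.1 hB)

lemma sum_filter_card_le_le_sum_powersetCard {g : Finset ι → ℝ} (hg : ∀ B, 0 ≤ g B) {m : ℕ}
    (hm : m ≤ Fintype.card ι) :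
    ∑ B with #B ≤ m, g B ≤ ∑ A ∈ powersetCard m univ, ∑ B ∈ A.powerset, g B := by
  classical
  have hsup (B : Finset ι) (hB : #B ≤ m) : ∃ A, B ⊆ A ∧ #A = m :=
    (exists_subsuperset_card_eq (subset_univ B) hB hm).imp fun A hA ↦ ⟨hA.1, hA.2.2⟩
  calc ∑ B with #B ≤ m, g B
      ≤ ∑ B with #B ≤ m, ∑ A ∈ powersetCard m univ with B ⊆ A, g B := by
        refine sum_le_sum fun B hB ↦ ?_
        obtain ⟨A, hBA, hA⟩ := hsup B (mem_filter.1 hB).2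
        exact single_le_sum (f := fun _ ↦ g B) (a := A) (fun _ _ ↦ hg B) (by simp [hA, hBA])
    _ = ∑ A ∈ powersetCard m univ, ∑ B ∈ A.powerset, g B :=
        sum_comm' fun B A ↦ by
          simp only [mem_filter, mem_univ, true_and, mem_powersetCard_univ, mem_powerset]
          exact ⟨fun h ↦ ⟨h.2.2, h.2.1⟩, fun h ↦ ⟨h.2 ▸ card_le_card h.1, h.2, h.1⟩⟩

lemma prod_coeff_expSeries_sub_one (x : ι → ℝ) {B : Finset ι} {p : ι → ℕ}
    (hp : ∀ i, p i ≠ 0 ↔ i ∈ B) :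
    ∏ i ∈ B, PowerSeries.coeff (p i) (expSeries (x i) - 1) =
      ∏ i, x i ^ p i / (p i).factorial := by
  rw [← prod_subset (subset_univ B) fun i _ hi ↦ by simp [not_not.1 fun h ↦ hi ((hp i).1 h)]]
  exact prod_congr rfl fun i hi ↦ by rw [coeff_expSeries_sub_one, if_neg ((hp i).2 hi)]

lemma supportTerm_eq_sum [DecidableEq ι] (k : ℕ) (x : ι → ℝ) (B : Finset ι) :
    supportTerm k x B =
      ∑ κ : ι → Fin (k + 1) with ∑ i, (κ i : ℕ) = k ∧ ∀ i, (κ i : ℕ) ≠ 0 ↔ i ∈ B,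
        ∏ i, x i ^ (κ i : ℕ) / (κ i : ℕ).factorial := by
  have hsum_eq {p : ι → ℕ} (hp : ∀ i, p i ≠ 0 ↔ i ∈ B) : ∑ i ∈ B, p i = ∑ i, p i :=
    sum_subset (subset_univ B) fun i _ hi ↦ not_not.1 fun h ↦ hi ((hp i).1 h)
  rw [supportTerm, PowerSeries.coeff_prod]
  symm
  refine sum_of_injOn (fun κ ↦ Finsupp.equivFunOnFinite.symm fun i ↦ (κ i : ℕ))
    (fun κ _ κ' _ h ↦ ?_) (fun κ hκ ↦ ?_) (fun p hp hout ↦ ?_) fun κ hκ ↦ ?_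
  · exact funext fun i ↦ Fin.ext (DFunLike.congr_fun h i)
  · obtain ⟨hsum, hsupp⟩ := (mem_filter.1 hκ).2
    exact mem_coe.2 (mem_finsuppAntidiag.2
      ⟨(hsum_eq hsupp).trans hsum, fun i hi ↦ (hsupp i).1 (by simpa using hi)⟩)
  · obtain ⟨hsum, hsupp⟩ := mem_finsuppAntidiag.1 hp
    by_contra hprod
    have hne : ∀ i ∈ B, p i ≠ 0 := fun i hi h ↦
      hprod (prod_eq_zero hi (by rw [coeff_expSeries_sub_one, if_pos h]))
    have hmem (i : ι) : p i ≠ 0 ↔ i ∈ B :=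
      ⟨fun h ↦ hsupp (Finsupp.mem_support_iff.2 h), hne i⟩
    have hsum' : ∑ i, p i = k := (hsum_eq hmem).symm.trans hsum
    have hle (i : ι) : p i < k + 1 :=
      Nat.lt_succ_of_le (hsum' ▸ single_le_sum (fun _ _ ↦ Nat.zero_le _) (mem_univ i))
    exact hout ⟨fun i ↦ ⟨p i, hle i⟩, by simpa using ⟨hsum', hmem⟩, by ext i; rfl⟩
  · exact (prod_coeff_expSeries_sub_one x (mem_filter.1 hκ).2.2).symm

end General

variable {n m : ℕ} {x : Fin n → ℝ}

lemma sum_supportTerm_le_M_div_factorial (hm : m ≤ n) (hx : ∀ i, 0 ≤ x i) (k : ℕ) :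
    ∑ B with #B ≤ m, supportTerm k x B ≤ M n k m x / k.factorial := by
  refine (sum_filter_card_le_le_sum_powersetCard (supportTerm_nonneg hx k) (by simpa)).trans_eq ?_
  simp only [sum_powerset_supportTerm, M, sum_div]

lemma G_eq_sum_supportTerm (k r : ℕ) (x : Fin n → ℝ) :
    G n k r x = ∑ B with r ≤ #B, supportTerm k x B := by
  simp only [G, supportTerm_eq_sum]
  rw [sum_comm' (t' := {κ : Fin n → Fin (k + 1) | ∑ i, (κ i : ℕ) = k ∧
    r ≤ #{i | (κ i : ℕ) ≠ 0}}) (s' := fun κ ↦ {({i | (κ i : ℕ) ≠ 0} : Finset _)})]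
  · simp only [sum_singleton]
  · intro B κ
    have hsupp : (∀ i, (κ i : ℕ) ≠ 0 ↔ i ∈ B) ↔ B = ({i | (κ i : ℕ) ≠ 0} : Finset _) := by
      simp only [Finset.ext_iff, mem_filter_univ, iff_comm]
    simp only [mem_filter, mem_univ, true_and, mem_singleton, hsupp]
    constructor
    · rintro ⟨hr, hsum, rfl⟩
      exact ⟨rfl, hsum, hr⟩
    · rintro ⟨rfl, hsum, hr⟩
      exact ⟨hr, hsum, rfl⟩

lemma sum_supportTerm_add_G (k m : ℕ) (x : Fin n → ℝ) :
    ∑ B with #B ≤ m, supportTerm k x B + G n k (m + 1) x = (∑ i, x i) ^ k / k.factorial := by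
  rw [G_eq_sum_supportTerm, ← sum_powerset_supportTerm, powerset_univ]
  simpa only [Nat.add_one_le_iff, not_le] using
    sum_filter_add_sum_filter_not univ (fun B ↦ #B ≤ m) (supportTerm k x)

lemma G_eq_coeff_esymmSum (k r : ℕ) (x : Fin n → ℝ) :
    G n k r x = PowerSeries.coeff k
      (esymmSum (fun m ↦ if r ≤ m then (1 : ℝ) else 0) fun i ↦ expSeries (x i) - 1) := by
  simp [G_eq_sum_supportTerm, supportTerm, esymmSum, sum_filter, apply_ite]

lemma M_div_factorial_eq_coeff_esymmSum (k r : ℕ) (x : Fin n → ℝ) :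
    M n k r x / k.factorial = PowerSeries.coeff k
      (esymmSum (fun m ↦ if m = r then (1 : ℝ) else 0) fun i ↦ expSeries (x i)) := by
  simp only [M, esymmSum, ← expSeries_sum, map_sum, coeff_expSeries, powersetCard_eq_filter,
    powerset_univ, sum_filter, sum_div, ite_div, zero_div, ite_smul, one_smul, zero_smul,
    apply_ite (PowerSeries.coeff k), map_zero]

end SupportTerm

section Monotonicity

variable {n : ℕ} {x y : Fin n → ℝ}

theorem IsTransfer.M_le (k r : ℕ) (hx : ∀ i, 0 ≤ x i) (h : IsTransfer x y) :
    M n k r y ≤ M n k r x := by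
  obtain ⟨i, j, hij, hsum, hi, hj, hrest⟩ := h
  rw [← div_le_div_iff_of_pos_right (Nat.cast_pos.2 k.factorial_pos), ← sub_nonneg,
    M_div_factorial_eq_coeff_esymmSum, M_div_factorial_eq_coeff_esymmSum, ← map_sub,
    esymmSum_sub_of_mul_eq_mul _ hij (fun l hli hlj ↦ by rw [hrest l hli hlj])
      (by rw [← expSeries_add, ← expSeries_add, hsum]), map_sum]
  refine sum_nonneg fun B _ ↦ ?_
  rw [PowerSeries.coeff_smul]
  refine mul_nonneg (by split_ifs <;> norm_num) (coeff_nonneg_of_mem_nonnegCoeffs (mul_mem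
    (expSeries_add_sub_mem_nonnegCoeffs (hx i) (hx j) hsum hi hj)
    (prod_mem fun l _ ↦ expSeries_mem_nonnegCoeffs (hx l))) k)

theorem IsTransfer.le_G (k r : ℕ) (hx : ∀ i, 0 ≤ x i) (h : IsTransfer x y) :
    G n k r x ≤ G n k r y := by
  obtain ⟨i, j, hij, hsum, hi, hj, hrest⟩ := h
  rw [← sub_nonneg, G_eq_coeff_esymmSum, G_eq_coeff_esymmSum, ← map_sub,
    esymmSum_sub_of_one_add_mul_one_add_eq _ hij (fun l hli hlj ↦ by rw [hrest l hli hlj])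
      (by simp only [add_sub_cancel, ← expSeries_add, hsum]), map_sum]
  refine sum_nonneg fun B _ ↦ ?_
  rw [PowerSeries.coeff_smul]
  refine mul_nonneg (by split_ifs <;> first | omega | norm_num)
    (coeff_nonneg_of_mem_nonnegCoeffs (mul_mem ?_
      (prod_mem fun l _ ↦ expSeries_sub_one_mem_nonnegCoeffs (hx l))) k)
  convert expSeries_add_sub_mem_nonnegCoeffs (hx i) (hx j) hsum hi hj using 1
  ring

end Monotonicity

section Recovery

variable {n k m : ℕ} {x y : Fin n → ℝ}

lemma sMax_pow_le_M (hm : m ≤ n) (hx : ∀ i, 0 ≤ x i) (k : ℕ) : sMax n m x ^ k ≤ M n k m x := by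
  obtain ⟨A, hA, hmax⟩ := exists_sMax_eq_sum hm x
  rw [hmax]
  exact single_le_sum (f := fun A : Finset (Fin n) ↦ (∑ i ∈ A, x i) ^ k)
    (fun B _ ↦ pow_nonneg (sum_nonneg fun i _ ↦ hx i) k) (mem_powersetCard_univ.2 hA)

lemma M_le_choose_mul_sMax_pow (hx : ∀ i, 0 ≤ x i) (k m : ℕ) :
    M n k m x ≤ n.choose m * sMax n m x ^ k := by
  have hterm : ∀ A ∈ powersetCard m (univ : Finset (Fin n)),
      (∑ i ∈ A, x i) ^ k ≤ sMax n m x ^ k := fun A hA ↦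
    pow_le_pow_left₀ (sum_nonneg fun i _ ↦ hx i)
      (mem_powersetCard_univ.1 hA ▸ sum_le_sMax x A) k
  simpa [M] using sum_le_card_nsmul _ _ _ hterm

lemma sMax_pow_le_M_of_G_le (hm : m ≤ n) (hx : ∀ i, 0 ≤ x i) (hy : ∀ i, 0 ≤ y i)
    (hsum : ∑ i, x i = ∑ i, y i) (hG : G n k (m + 1) x ≤ G n k (m + 1) y) :
    sMax n m y ^ k ≤ M n k m x := by
  obtain ⟨A, rfl, hmax⟩ := exists_sMax_eq_sum hm y
  rw [← div_le_div_iff_of_pos_right (Nat.cast_pos.2 k.factorial_pos)]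
  calc sMax n #A y ^ k / k.factorial
      ≤ ∑ B with #B ≤ #A, supportTerm k y B :=
        hmax ▸ pow_sum_div_factorial_le_sum_supportTerm hy k A
    _ ≤ ∑ B with #B ≤ #A, supportTerm k x B := by
        have hcompl := sum_supportTerm_add_G k #A x
        rw [hsum, ← sum_supportTerm_add_G k #A y] at hcompl
        linarith
    _ ≤ M n k #A x / k.factorial := sum_supportTerm_le_M_div_factorial hm hx k

lemma le_of_forall_pow_le_mul_pow {a b C : ℝ} (hb : 0 ≤ b)
    (h : ∀ k : ℕ, 1 ≤ k → a ^ k ≤ C * b ^ k) : a ≤ b := by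
  by_contra! hab
  rcases hb.eq_or_lt with rfl | hb
  · exact hab.not_ge (by simpa using h 1 le_rfl)
  have hratio : 1 < a / b := (one_lt_div hb).2 hab
  obtain ⟨k, hk⟩ := pow_unbounded_of_one_lt C hratio
  have hbound : (a / b) ^ (k + 1) ≤ C := by
    rw [div_pow, div_le_iff₀ (by positivity)]
    exact h (k + 1) (by omega)
  exact (hk.trans (pow_lt_pow_right₀ hratio k.lt_succ_self)).not_ge hbound

theorem majorizes_of_forall_sMax_pow_le_M (hx : ∀ i, 0 ≤ x i) (hsum : ∑ i, x i = ∑ i, y i)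
    (h : ∀ k m, 1 ≤ k → 1 ≤ m → m ≤ n → sMax n m y ^ k ≤ M n k m x) : Majorizes n x y :=
  ⟨hsum, fun m hm₀ hm ↦ le_of_forall_pow_le_mul_pow (sMax_nonneg m hx) fun k hk ↦
    (h k m hk hm₀ (by omega)).trans (M_le_choose_mul_sMax_pow hx k m)⟩

end Recovery

theorem stmt13 (n : ℕ) (hn : 1 ≤ n) (x y : Fin n → ℝ)
    (hx : ∀ i, 0 ≤ x i) (hy : ∀ i, 0 ≤ y i)
    (hsum : ∑ i, x i = ∑ i, y i) :
    (Majorizes n x y ↔ ∀ k r : ℕ, 1 ≤ k → 1 ≤ r → G n k r x ≤ G n k r y) ∧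
    (Majorizes n x y ↔ ∀ k r : ℕ, 1 ≤ k → 1 ≤ r → M n k r y ≤ M n k r x) := by
  refine ⟨⟨fun h k r _ _ ↦ ?_, fun h ↦ ?_⟩, ⟨fun h k r _ _ ↦ ?_, fun h ↦ ?_⟩⟩
  · exact le_of_reflTransGen_isTransfer (fun _ _ hu huv ↦ huv.le_G k r hu) hx
      h.reflTransGen_isTransfer
  · exact majorizes_of_forall_sMax_pow_le_M hx hsum fun k m hk _ hm ↦
      sMax_pow_le_M_of_G_le hm hx hy hsum (h k (m + 1) hk (by omega))
  · exact neg_le_neg_iff.1 <| le_of_reflTransGen_isTransfer (F := fun z ↦ -M n k r z)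
      (fun _ _ hu huv ↦ neg_le_neg (huv.M_le k r hu)) hx h.reflTransGen_isTransfer
  · exact majorizes_of_forall_sMax_pow_le_M hx hsum fun k m hk hm₀ hm ↦
      (sMax_pow_le_M hm hy k).trans (h k m hk hm₀)
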